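/- Let N ≥ 1, let p₁,…,p_N and p̄₁,…,p̄_N be real numbers with pᵢ + p̄ⱼ ≠ 0 for all i, j, and let θ₁,…,θ_N and θ̄₁,…,θ̄_N be real numbers. For (x,t) ∈ ℝ² define the N×N matrix A(x,t) with entries A_{ij}(x,t) = (1/(pᵢ+p̄ⱼ))·(exp((pᵢ+p̄ⱼ)x − i(pᵢ² − p̄ⱼ²)t) + exp(i(θᵢ + θ̄ⱼ))). Let τ₁(x,t) be the determinant of the (N+1)×(N+1) matrix [[A(x,t), u(x,t)ᵀ],[−v, 0]] where uᵢ(x,t) = exp(pᵢx − i pᵢ² t) and vⱼ = exp(i θ̄ⱼ), and let τ₋₁(x,t) be the determinant of [[A(x,t), wᵀ],[−z(x,t), 0]] where wᵢ = exp(i θᵢ) and zⱼ(x,t) = exp(p̄ⱼx + i p̄ⱼ² t). Then for all (x,t): τ₋₁(x,t) = C(x,t)·conj(τ₁(−x,t)), where C(x,t) = Π_{j=1}^{N} exp((pⱼ+p̄ⱼ)x − i(pⱼ² − p̄ⱼ²)t + i(θⱼ + θ̄ⱼ)). -/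

import Mathlib

open Complex Matrix ComplexConjugate

/-- The Gram matrix `A(x,t)` with entries
`A_{ij} = (1/(pᵢ+p̄ⱼ))(e^{(pᵢ+p̄ⱼ)x - i(pᵢ²-p̄ⱼ²)t} + e^{i(θᵢ+θ̄ⱼ)})`. -/
noncomputable def gramAxt (N : ℕ) (p pb θ θb : Fin N → ℝ) (x t : ℝ) :
    Matrix (Fin N) (Fin N) ℂ :=
  Matrix.of fun i j =>
    (1 / ((p i : ℂ) + (pb j : ℂ)))
      * (Complex.exp (((p i : ℂ) + (pb j : ℂ)) * (x : ℂ)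
            - Complex.I * ((p i : ℂ) ^ 2 - (pb j : ℂ) ^ 2) * (t : ℂ))
          + Complex.exp (Complex.I * ((θ i : ℂ) + (θb j : ℂ))))

/-- `τ₁ = det [[A, uᵀ],[-v, 0]]` with `uᵢ = e^{pᵢx - ipᵢ²t}` and `vⱼ = e^{iθ̄ⱼ}`. -/
noncomputable def tau1xt (N : ℕ) (p pb θ θb : Fin N → ℝ) (x t : ℝ) : ℂ :=
  Matrix.det (Matrix.of fun i j : Fin (N + 1) =>
    if hi : (i : ℕ) < N then
      if hj : (j : ℕ) < N then gramAxt N p pb θ θb x t ⟨i, hi⟩ ⟨j, hj⟩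
      else Complex.exp ((p ⟨i, hi⟩ : ℂ) * (x : ℂ)
        - Complex.I * (p ⟨i, hi⟩ : ℂ) ^ 2 * (t : ℂ))
    else
      if hj : (j : ℕ) < N then -Complex.exp (Complex.I * (θb ⟨j, hj⟩ : ℂ))
      else 0)

/-- `τ₋₁ = det [[A, wᵀ],[-z, 0]]` with `wᵢ = e^{iθᵢ}` and `zⱼ = e^{p̄ⱼx + ip̄ⱼ²t}`. -/
noncomputable def taum1xt (N : ℕ) (p pb θ θb : Fin N → ℝ) (x t : ℝ) : ℂ :=
  Matrix.det (Matrix.of fun i j : Fin (N + 1) =>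
    if hi : (i : ℕ) < N then
      if hj : (j : ℕ) < N then gramAxt N p pb θ θb x t ⟨i, hi⟩ ⟨j, hj⟩
      else Complex.exp (Complex.I * (θ ⟨i, hi⟩ : ℂ))
    else
      if hj : (j : ℕ) < N then
        -Complex.exp ((pb ⟨j, hj⟩ : ℂ) * (x : ℂ)
          + Complex.I * (pb ⟨j, hj⟩ : ℂ) ^ 2 * (t : ℂ))
      else 0)

/-- The gauge factor `C(x,t) = Πⱼ e^{(pⱼ+p̄ⱼ)x - i(pⱼ²-p̄ⱼ²)t + i(θⱼ+θ̄ⱼ)}`. -/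
noncomputable def gaugeCxt (N : ℕ) (p pb θ θb : Fin N → ℝ) (x t : ℝ) : ℂ :=
  ∏ j : Fin N,
    Complex.exp (((p j : ℂ) + (pb j : ℂ)) * (x : ℂ)
      - Complex.I * ((p j : ℂ) ^ 2 - (pb j : ℂ) ^ 2) * (t : ℂ)
      + Complex.I * ((θ j : ℂ) + (θb j : ℂ)))

/-!
Both `τ` functions are bordered determinants over the matrix `Kᵢⱼ (aᵢ bⱼ + αᵢ βⱼ)`, where `K` is the
real Cauchy matrix of the wave numbers, `a` and `b` are plane waves and `α`, `β` are the constant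
phases. Since the wave numbers and the phase constants are real, reflecting `x` and conjugating
inverts each of `a, b, α, β` and fixes `K`. Multiplying row `i` by `aᵢ αᵢ` and column `j` by
`bⱼ βⱼ` undoes the inversion while exchanging `a bᵀ` with `α βᵀ`, and hence the border of `τ₁`
with that of `τ₋₁`; the gauge factor is the product of all these multipliers.
-/

section BorderedGram

variable {m n R S : Type*}

/-- The bordered matrix `[[A, uᵀ], [-v, 0]]`, the common shape of `τ₁` and `τ₋₁`; the border is
indexed by `Fin 1` so that `finSumFinEquiv` turns the index type into `Fin (N + 1)`. -/
def borderedMatrix [Ring R] (A : Matrix m n R) (u : m → R) (v : n → R) :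
    Matrix (m ⊕ Fin 1) (n ⊕ Fin 1) R :=
  fromBlocks A (replicateCol (Fin 1) u) (replicateRow (Fin 1) (-v)) 0

/-- The Gram-type matrix `Kᵢⱼ (aᵢ bⱼ + αᵢ βⱼ)` of which the matrix `A(x,t)` is an instance,
with `K` a Cauchy matrix, `a` and `b` plane waves, and `α` and `β` constant phases. -/
def gramMatrix [Semiring R] (K : Matrix m n R) (a : m → R) (b : n → R) (α : m → R) (β : n → R) :
    Matrix m n R :=
  K ⊙ (vecMulVec a b + vecMulVec α β)

theorem borderedMatrix_map [Ring R] [Ring S] (f : R →+* S) (A : Matrix m n R) (u : m → R)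
    (v : n → R) :
    (borderedMatrix A u v).map f = borderedMatrix (A.map f) (f ∘ u) (f ∘ v) := by
  ext (i | i) (j | j) <;> simp [borderedMatrix]

theorem gramMatrix_map [Semiring R] [Semiring S] (f : R →+* S) (K : Matrix m n R) (a : m → R)
    (b : n → R) (α : m → R) (β : n → R) :
    (gramMatrix K a b α β).map f = gramMatrix (K.map f) (f ∘ a) (f ∘ b) (f ∘ α) (f ∘ β) := by
  ext i j
  simp [gramMatrix, vecMulVec_apply]

variable [Fintype m] [DecidableEq m] [Fintype n] [DecidableEq n]

theorem borderedMatrix_diagonal_mul_mul_diagonal [Ring R] (A : Matrix m n R)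
    (u r : m → R) (v c : n → R) :
    borderedMatrix (diagonal r * A * diagonal c) (r * u) (v * c) =
      fromBlocks (diagonal r) 0 0 (1 : Matrix (Fin 1) (Fin 1) R) * borderedMatrix A u v *
        fromBlocks (diagonal c) 0 0 (1 : Matrix (Fin 1) (Fin 1) R) := by
  ext (i | i) (j | j) <;> simp [borderedMatrix, fromBlocks_multiply]

theorem det_borderedMatrix_diagonal_mul_mul_diagonal [CommRing R] (A : Matrix n n R)
    (u v r c : n → R) :
    (borderedMatrix (diagonal r * A * diagonal c) (r * u) (v * c)).det =
      (∏ i, r i) * (∏ j, c j) * (borderedMatrix A u v).det := by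
  rw [borderedMatrix_diagonal_mul_mul_diagonal]
  simp only [det_mul, det_fromBlocks_zero₂₁, det_diagonal, det_one, mul_one]
  ring

theorem gramMatrix_eq_diagonal_mul_gramMatrix_inv_mul_diagonal [Field R] (K : Matrix m n R)
    {a α : m → R} {b β : n → R} (ha : ∀ i, a i ≠ 0) (hb : ∀ j, b j ≠ 0) (hα : ∀ i, α i ≠ 0)
    (hβ : ∀ j, β j ≠ 0) :
    gramMatrix K a b α β =
      diagonal (a * α) * gramMatrix K a⁻¹ b⁻¹ α⁻¹ β⁻¹ * diagonal (b * β) := by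
  ext i j
  have entry_eq : a i * b j + α i * β j =
      a i * α i * ((a i)⁻¹ * (b j)⁻¹ + (α i)⁻¹ * (β j)⁻¹) * (b j * β j) := by
    field_simp [ha i, hb j, hα i, hβ j]
    ring
  simp only [gramMatrix, mul_diagonal, diagonal_mul, hadamard_apply, Matrix.add_apply,
    vecMulVec_apply, Pi.mul_apply, Pi.inv_apply]
  rw [entry_eq]
  ring

theorem det_borderedMatrix_gramMatrix_inv [Field R] (K : Matrix n n R) {a b α β : n → R}
    (ha : ∀ i, a i ≠ 0) (hb : ∀ j, b j ≠ 0) (hα : ∀ i, α i ≠ 0) (hβ : ∀ j, β j ≠ 0) :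
    (borderedMatrix (gramMatrix K a b α β) α b).det =
      (∏ i, (a * α) i) * (∏ j, (b * β) j) *
        (borderedMatrix (gramMatrix K a⁻¹ b⁻¹ α⁻¹ β⁻¹) a⁻¹ β⁻¹).det := by
  have hu : α = a * α * a⁻¹ := by
    ext i
    exact (eq_mul_inv_iff_mul_eq₀ (ha i)).2 (mul_comm _ _)
  have hv : b = β⁻¹ * (b * β) := by
    ext j
    exact (eq_inv_mul_iff_mul_eq₀ (hβ j)).2 (mul_comm _ _)
  rw [← det_borderedMatrix_diagonal_mul_mul_diagonal,
    ← gramMatrix_eq_diagonal_mul_gramMatrix_inv_mul_diagonal K ha hb hα hβ, ← hu, ← hv]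

end BorderedGram

section Waves

variable {ι : Type*}

/-- The vector of plane waves `exp (pᵢ x - i pᵢ² t)`, which is the border column `u` of `τ₁`; the
adjoint waves `exp (p̄ⱼ x + i p̄ⱼ² t)` in the border row `z` of `τ₋₁` are obtained at time `-t`. -/
noncomputable def planeWave (p : ι → ℝ) (x t : ℝ) : ι → ℂ :=
  fun i => exp (p i * x - I * p i ^ 2 * t)

/-- The vector of constant phases `exp (i θᵢ)`, which gives the border entries `v` and `w`. -/
noncomputable def phase (θ : ι → ℝ) : ι → ℂ :=
  fun i => exp (I * θ i)

theorem planeWave_ne_zero (p : ι → ℝ) (x t : ℝ) (i : ι) : planeWave p x t i ≠ 0 :=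
  exp_ne_zero _

theorem phase_ne_zero (θ : ι → ℝ) (i : ι) : phase θ i ≠ 0 :=
  exp_ne_zero _

theorem conj_comp_planeWave_neg (p : ι → ℝ) (x t : ℝ) :
    conj ∘ planeWave p (-x) t = (planeWave p x t)⁻¹ := by
  ext i
  simp only [planeWave, Function.comp_apply, Pi.inv_apply, ← exp_conj, ← exp_neg, map_sub, map_mul,
    map_pow, map_neg, conj_ofReal, conj_I, ofReal_neg]
  ring_nf

theorem conj_comp_phase (θ : ι → ℝ) : conj ∘ phase θ = (phase θ)⁻¹ := by
  ext i
  simp only [phase, Function.comp_apply, Pi.inv_apply, ← exp_conj, ← exp_neg, map_mul, conj_ofReal,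
    conj_I, neg_mul]

end Waves

section Cauchy

variable {m n : Type*}

/-- The Cauchy matrix `1 / (xᵢ + yⱼ)`, the common weight of the entries of `A(x,t)`; an entry with
`xᵢ + yⱼ = 0` is `0`. -/
def cauchyMatrix {R : Type*} [Add R] [Inv R] (x : m → R) (y : n → R) : Matrix m n R :=
  of fun i j => (x i + y j)⁻¹

theorem map_ofReal_map_conj (K : Matrix m n ℝ) : (K.map ofReal).map conj = K.map ofReal := by
  ext i j
  exact conj_ofReal (K i j)

end Cauchy

section TauFunctions

variable (N : ℕ) (p pb θ θb : Fin N → ℝ) (x t : ℝ)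

theorem gramAxt_eq_gramMatrix :
    gramAxt N p pb θ θb x t =
      gramMatrix ((cauchyMatrix p pb).map ofReal) (planeWave p x t) (planeWave pb x (-t))
        (phase θ) (phase θb) := by
  ext i j
  simp only [gramAxt, gramMatrix, planeWave, phase, of_apply, hadamard_apply, map_apply,
    cauchyMatrix, Matrix.add_apply, vecMulVec_apply, ← exp_add, one_div, ofReal_inv, ofReal_add,
    ofReal_neg]
  ring_nf

theorem tau1xt_eq_det_borderedMatrix :
    tau1xt N p pb θ θb x t =
      (borderedMatrix (gramAxt N p pb θ θb x t) (planeWave p x t) (phase θb)).det := by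
  rw [tau1xt, ← det_submatrix_equiv_self finSumFinEquiv]
  congr 1
  ext (i | i) (j | j) <;> simp [borderedMatrix, planeWave, phase]

theorem taum1xt_eq_det_borderedMatrix :
    taum1xt N p pb θ θb x t =
      (borderedMatrix (gramAxt N p pb θ θb x t) (phase θ) (planeWave pb x (-t))).det := by
  rw [taum1xt, ← det_submatrix_equiv_self finSumFinEquiv]
  congr 1
  ext (i | i) (j | j) <;> simp [borderedMatrix, planeWave, phase]

theorem gaugeCxt_eq_prod_mul_prod :
    gaugeCxt N p pb θ θb x t =
      (∏ i, (planeWave p x t * phase θ) i) * ∏ j, (planeWave pb x (-t) * phase θb) j := by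
  rw [gaugeCxt, ← Finset.prod_mul_distrib]
  refine Finset.prod_congr rfl fun j _ => ?_
  simp only [planeWave, phase, Pi.mul_apply, ← exp_add, ofReal_neg]
  ring_nf

theorem conj_tau1xt_neg :
    conj (tau1xt N p pb θ θb (-x) t) =
      (borderedMatrix
        (gramMatrix ((cauchyMatrix p pb).map ofReal) (planeWave p x t)⁻¹
          (planeWave pb x (-t))⁻¹ (phase θ)⁻¹ (phase θb)⁻¹)
        (planeWave p x t)⁻¹ (phase θb)⁻¹).det := by
  simp only [tau1xt_eq_det_borderedMatrix, gramAxt_eq_gramMatrix, RingHom.map_det,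
    RingHom.mapMatrix_apply, borderedMatrix_map, gramMatrix_map, map_ofReal_map_conj,
    conj_comp_planeWave_neg, conj_comp_phase]

end TauFunctions

/-- Lemma 1, second relation, real wave numbers: for all `(x,t)`,
`τ₋₁(x,t) = C(x,t) conj(τ₁(-x,t))`. -/
theorem stmt7 (N : ℕ) (hN : 1 ≤ N) (p pb θ θb : Fin N → ℝ)
    (hp : ∀ i j, p i + pb j ≠ 0) :
    ∀ x t : ℝ,
      taum1xt N p pb θ θb x t
        = gaugeCxt N p pb θ θb x t * conj (tau1xt N p pb θ θb (-x) t) := by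
  intro x t
  rw [taum1xt_eq_det_borderedMatrix, gramAxt_eq_gramMatrix, gaugeCxt_eq_prod_mul_prod,
    conj_tau1xt_neg]
  exact det_borderedMatrix_gramMatrix_inv _ (planeWave_ne_zero p x t)
    (planeWave_ne_zero pb x (-t)) (phase_ne_zero θ) (phase_ne_zero θb)
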